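/- arXiv:2401.14771 — 2 statements merged into one kernel-verified Lean document; each statement's English description precedes it below -/
import Mathlib

section
/- Let α > 0, m = ⌈α⌉, T > 0, M ∈ ℝ, real numbers y₀, …, y_{m−1}, and let g : [0,T] × ℝ → ℝ be continuous and Lipschitz continuous in its second variable. Let y : [0,T] → ℝ be continuous and satisfy y(t) = ∑_{ℓ=0}^{m−1} y_ℓ t^ℓ / ℓ! + (1/Γ(α)) ∫₀ᵗ (t−s)^{α−1} (M y(s) + g(s, y(s))) ds for all t ∈ [0,T]. Then for all t ∈ [0,T], y(t) = ∑_{ℓ=0}^{m−1} y_ℓ t^ℓ E_{α,ℓ+1}(M t^α) + ∫₀ᵗ (t−τ)^{α−1} E_{α,α}(M (t−τ)^α) g(τ, y(τ)) dτ. -/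
/-- The two-parameter Mittag-Leffler function `E_{α,β}(z) = ∑ₖ zᵏ / Γ(αk + β)`. -/
noncomputable def mlE (α β z : ℝ) : ℝ := ∑' k : ℕ, z ^ k / Real.Gamma (α * k + β)

open Filter MeasureTheory Set Topology

section MittagLeffler

lemma rpow_mul_exp_neg_le_Gamma {A x : ℝ} (hA : 0 < A) (hx : 1 ≤ x) :
    A ^ (x - 1) * Real.exp (-A) ≤ Real.Gamma x := by
  have hint := Real.GammaIntegral_convergent (zero_lt_one.trans_le hx)
  have hsub : Ioi A ⊆ Ioi 0 := Ioi_subset_Ioi hA.le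
  calc A ^ (x - 1) * Real.exp (-A)
      = ∫ s in Ioi A, A ^ (x - 1) * Real.exp (-s) := by
        rw [integral_const_mul, integral_exp_neg_Ioi]
    _ ≤ ∫ s in Ioi A, Real.exp (-s) * s ^ (x - 1) := by
        refine setIntegral_mono_on ((integrableOn_exp_neg_Ioi A).const_mul _)
          (hint.mono_set hsub) measurableSet_Ioi fun s (hs : A < s) => ?_
        rw [mul_comm]
        gcongr
    _ ≤ ∫ s in Ioi 0, Real.exp (-s) * s ^ (x - 1) := by
        refine setIntegral_mono_set hint ?_ hsub.eventuallyLE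
        filter_upwards [ae_restrict_mem measurableSet_Ioi] with s (hs : 0 < s)
        exact mul_nonneg (Real.exp_nonneg _) (Real.rpow_nonneg hs.le _)
    _ = Real.Gamma x := (Real.Gamma_eq_integral (zero_lt_one.trans_le hx)).symm

lemma summable_pow_div_Gamma {α : ℝ} (hα : 0 < α) (β z : ℝ) :
    Summable fun k : ℕ => z ^ k / Real.Gamma (α * k + β) := by
  -- `A` is chosen so that `rpow_mul_exp_neg_le_Gamma` gives a geometric series of ratio `1 / 2`.
  obtain ⟨A, hA, hAα⟩ : ∃ A : ℝ, 0 < A ∧ A ^ α = 2 * (|z| + 1) :=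
    ⟨(2 * (|z| + 1)) ^ α⁻¹, by positivity, Real.rpow_inv_rpow (by positivity) hα.ne'⟩
  have hratio : |z| / A ^ α ≤ 1 / 2 := by
    rw [hAα, div_le_iff₀ (by positivity)]
    linarith
  have hlarge : ∀ᶠ k : ℕ in atTop, 1 ≤ α * k + β :=
    (tendsto_atTop_add_const_right _ β
      (tendsto_natCast_atTop_atTop.const_mul_atTop hα)).eventually_ge_atTop 1
  refine Summable.of_norm_bounded_eventually_nat (g := fun k => A ^ (1 - β) * Real.exp A
    * (1 / 2) ^ k) (summable_geometric_two.mul_left _) ?_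
  filter_upwards [hlarge] with k hk
  have hΓ := rpow_mul_exp_neg_le_Gamma hA hk
  have hA_pow : A ^ (α * k + β - 1) = (A ^ α) ^ k / A ^ (1 - β) := by
    rw [← Real.rpow_mul_natCast hA.le, ← Real.rpow_sub hA]
    ring_nf
  calc ‖z ^ k / Real.Gamma (α * k + β)‖
      = |z| ^ k / Real.Gamma (α * k + β) := by
        rw [norm_div, norm_pow, Real.norm_eq_abs, Real.norm_eq_abs,
          abs_of_pos (Real.Gamma_pos_of_pos (zero_lt_one.trans_le hk))]
    _ ≤ |z| ^ k / (A ^ (α * k + β - 1) * Real.exp (-A)) := by gcongr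
    _ = A ^ (1 - β) * Real.exp A * (|z| / A ^ α) ^ k := by
        rw [hA_pow, Real.exp_neg, div_pow]
        field_simp
    _ ≤ A ^ (1 - β) * Real.exp A * (1 / 2) ^ k := by gcongr

lemma hasSum_mlE {α : ℝ} (hα : 0 < α) (β z : ℝ) :
    HasSum (fun k : ℕ => z ^ k / Real.Gamma (α * k + β)) (mlE α β z) :=
  (summable_pow_div_Gamma hα β z).hasSum

lemma mlE_zero_right (α β : ℝ) : mlE α β 0 = 1 / Real.Gamma β := by
  rw [mlE, tsum_eq_single 0 fun k hk => by simp [hk]]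
  simp

end MittagLeffler

section Beta

open ProbabilityTheory (beta beta_pos beta_eq_betaIntegralReal)

variable {a b r t : ℝ}

lemma integral_rpow_mul_sub_rpow (ha : 0 < a) (hb : 0 < b) (ht : 0 < t) :
    ∫ x in 0..t, x ^ (a - 1) * (t - x) ^ (b - 1) = beta a b * t ^ (a + b - 1) := by
  have hcomplex : ((∫ x in 0..t, x ^ (a - 1) * (t - x) ^ (b - 1) : ℝ) : ℂ)
      = (t : ℂ) ^ ((a : ℂ) + b - 1) * Complex.betaIntegral a b := by
    rw [← Complex.betaIntegral_scaled _ _ ht, ← intervalIntegral.integral_ofReal]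
    refine intervalIntegral.integral_congr fun x hx => ?_
    rw [uIcc_of_le ht.le] at hx
    simp [Complex.ofReal_cpow hx.1, Complex.ofReal_cpow (sub_nonneg.2 hx.2)]
  have hpow : (t : ℂ) ^ ((a : ℂ) + b - 1) = ((t ^ (a + b - 1) : ℝ) : ℂ) := by
    simp [Complex.ofReal_cpow ht.le]
  rw [beta_eq_betaIntegralReal a b ha hb, mul_comm, ← Complex.re_ofReal_mul, ← hpow, ← hcomplex,
    Complex.ofReal_re]

lemma integral_sub_rpow_mul_sub_rpow (ha : 0 < a) (hb : 0 < b) (hrt : r < t) :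
    ∫ s in r..t, (t - s) ^ (a - 1) * (s - r) ^ (b - 1) = beta a b * (t - r) ^ (a + b - 1) := by
  rw [← integral_rpow_mul_sub_rpow ha hb (sub_pos.2 hrt)]
  simpa using intervalIntegral.integral_comp_sub_left (a := r) (b := t)
    (fun x => x ^ (a - 1) * (t - r - x) ^ (b - 1)) t

lemma intervalIntegrable_sub_rpow_mul_sub_rpow (ha : 0 < a) (hb : 0 < b) (hrt : r < t) :
    IntervalIntegrable (fun s => (t - s) ^ (a - 1) * (s - r) ^ (b - 1)) volume r t := by
  refine intervalIntegral.intervalIntegrable_of_integral_ne_zero ?_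
  rw [integral_sub_rpow_mul_sub_rpow ha hb hrt]
  exact (mul_pos (beta_pos ha hb) (Real.rpow_pos_of_pos (sub_pos.2 hrt) _)).ne'

end Beta

section Fubini

variable {X Y E : Type*} [MeasurableSpace X] [MeasurableSpace Y]
  [NormedAddCommGroup E] [NormedSpace ℝ E] [CompleteSpace E]

lemma integral_integral_smul_swap_of_nonneg {μ : Measure X} {ν : Measure Y} [SFinite μ] [SFinite ν]
    {K : X → Y → ℝ} {f : Y → E} (hK : Measurable (Function.uncurry K))
    (hK_nonneg : ∀ x y, 0 ≤ K x y) (hK_int : ∀ᵐ y ∂ν, Integrable (K · y) μ)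
    (hf : AEStronglyMeasurable f ν) (hKf : Integrable (fun y => (∫ x, K x y ∂μ) • f y) ν) :
    ∫ x, ∫ y, K x y • f y ∂ν ∂μ = ∫ y, (∫ x, K x y ∂μ) • f y ∂ν := by
  have hmeas : AEStronglyMeasurable (Function.uncurry fun x y => K x y • f y) (μ.prod ν) :=
    hK.aestronglyMeasurable.smul hf.comp_snd
  have hint : Integrable (Function.uncurry fun x y => K x y • f y) (μ.prod ν) := by
    refine (integrable_prod_iff' hmeas).2 ⟨?_, hKf.norm.congr (.of_forall fun y => ?_)⟩
    · filter_upwards [hK_int] with y hy using hy.smul_const (f y)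
    · simp only [Function.uncurry_apply_pair, norm_smul, integral_mul_const,
        Real.norm_of_nonneg (hK_nonneg _ y), Real.norm_of_nonneg (integral_nonneg (hK_nonneg · y))]
  simp only [integral_integral_swap hint, integral_smul_const]

end Fubini

section RiemannLiouville

variable {E : Type*} [NormedAddCommGroup E] [NormedSpace ℝ E]

/-- The Riemann–Liouville fractional integral `J^a f (t)` of order `a > 0` with base point `0`. -/
noncomputable def riemannLiouville (a : ℝ) (f : ℝ → E) (t : ℝ) : E :=
  (1 / Real.Gamma a) • ∫ s in 0..t, (t - s) ^ (a - 1) • f s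

/-- Absolute convergence, at the single point `t`, of the integral defining
`riemannLiouville a f t`. -/
def RiemannLiouvilleIntegrable (a : ℝ) (f : ℝ → E) (t : ℝ) : Prop :=
  IntervalIntegrable (fun s => (t - s) ^ (a - 1) • f s) volume 0 t

variable {a b t : ℝ} {f g : ℝ → E}

lemma riemannLiouvilleIntegrable_of_continuousOn (ha : 0 < a) (hf : ContinuousOn f (uIcc 0 t)) :
    RiemannLiouvilleIntegrable a f t := by
  have hkernel : IntervalIntegrable (fun s => (t - s) ^ (a - 1)) volume 0 t := by
    simpa using (intervalIntegral.intervalIntegrable_rpow' (a := t) (b := 0) (r := a - 1)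
      (by linarith)).comp_sub_left t
  exact hkernel.smul_continuousOn hf

namespace RiemannLiouvilleIntegrable

lemma add (hf : RiemannLiouvilleIntegrable a f t) (hg : RiemannLiouvilleIntegrable a g t) :
    RiemannLiouvilleIntegrable a (fun s => f s + g s) t := by
  simpa only [RiemannLiouvilleIntegrable, smul_add] using IntervalIntegrable.add hf hg

lemma const_smul (hf : RiemannLiouvilleIntegrable a f t) (c : ℝ) :
    RiemannLiouvilleIntegrable a (fun s => c • f s) t := by
  simpa only [RiemannLiouvilleIntegrable, smul_comm _ c] using
    IntervalIntegrable.continuousOn_smul hf continuousOn_const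

lemma mono (hf : RiemannLiouvilleIntegrable a f t) (ht : 0 ≤ t) (hab : a ≤ b) :
    RiemannLiouvilleIntegrable b f t := by
  have hcont : Continuous fun s => (t - s) ^ (b - a) :=
    (continuous_sub_left t).rpow_const fun _ => .inr (sub_nonneg.2 hab)
  refine (IntervalIntegrable.continuousOn_smul hf hcont.continuousOn).congr_uIoo fun s hs => ?_
  rw [uIoo_of_le ht] at hs
  dsimp only
  rw [smul_smul, ← Real.rpow_add (sub_pos.2 hs.2)]
  ring_nf

lemma aestronglyMeasurable (hf : RiemannLiouvilleIntegrable a f t) (ht : 0 ≤ t) :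
    AEStronglyMeasurable f (volume.restrict (Ioo 0 t)) := by
  have hkernel : Measurable fun s => ((t - s) ^ (a - 1))⁻¹ := by fun_prop
  have hmeas := hkernel.aestronglyMeasurable.smul
    ((intervalIntegrable_iff_integrableOn_Ioo_of_le ht).1 hf).aestronglyMeasurable
  refine hmeas.congr ?_
  filter_upwards [ae_restrict_mem measurableSet_Ioo] with s hs
  exact inv_smul_smul₀ (Real.rpow_pos_of_pos (sub_pos.2 hs.2) _).ne' _

end RiemannLiouvilleIntegrable

lemma riemannLiouville_congr (ht : 0 ≤ t) (h : EqOn f g (Icc 0 t)) :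
    riemannLiouville a f t = riemannLiouville a g t := by
  refine congrArg _ (intervalIntegral.integral_congr fun s hs => ?_)
  rw [h (uIcc_of_le ht ▸ hs)]

lemma riemannLiouville_add (hf : RiemannLiouvilleIntegrable a f t)
    (hg : RiemannLiouvilleIntegrable a g t) :
    riemannLiouville a (fun s => f s + g s) t
      = riemannLiouville a f t + riemannLiouville a g t := by
  simp only [riemannLiouville, smul_add, intervalIntegral.integral_add hf hg]

lemma riemannLiouville_sub (hf : RiemannLiouvilleIntegrable a f t)
    (hg : RiemannLiouvilleIntegrable a g t) :
    riemannLiouville a (fun s => f s - g s) t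
      = riemannLiouville a f t - riemannLiouville a g t := by
  simp only [riemannLiouville, smul_sub, intervalIntegral.integral_sub hf hg]

lemma riemannLiouville_const_smul (c : ℝ) :
    riemannLiouville a (fun s => c • f s) t = c • riemannLiouville a f t := by
  simp only [riemannLiouville, smul_comm _ c, intervalIntegral.integral_smul]

lemma riemannLiouville_sum_smul_const [CompleteSpace E] {ι : Type*} (S : Finset ι)
    {w : ι → ℝ → ℝ} (hw : ∀ i ∈ S, RiemannLiouvilleIntegrable a (w i) t) (c : ι → E) :
    riemannLiouville a (fun s => ∑ i ∈ S, w i s • c i) t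
      = ∑ i ∈ S, riemannLiouville a (w i) t • c i := by
  have hwc : ∀ i ∈ S, IntervalIntegrable (fun s => ((t - s) ^ (a - 1) • w i s) • c i) volume 0 t :=
    fun i hi => IntervalIntegrable.smul_continuousOn (hw i hi) continuousOn_const
  simp only [riemannLiouville, Finset.smul_sum, smul_assoc] at hwc ⊢
  rw [intervalIntegral.integral_finsetSum hwc, Finset.smul_sum]
  simp only [← smul_assoc _ _ (c _), intervalIntegral.integral_smul_const]

end RiemannLiouville

section Semigroup

open ProbabilityTheory (beta beta_pos)

/-- The kernel of `J^a ∘ J^b` on the triangle `r < s < t`, extended by zero, without the Gamma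
factors. Written as a kernel on the square so that the order of integration can be exchanged. -/
noncomputable def abelCompKernel (a b t s r : ℝ) : ℝ :=
  (Ioo r t).indicator (fun s => (t - s) ^ (a - 1) * (s - r) ^ (b - 1)) s

variable {a b t : ℝ}

lemma measurable_uncurry_abelCompKernel (a b t : ℝ) :
    Measurable (Function.uncurry (abelCompKernel a b t)) := by
  have hset : MeasurableSet {p : ℝ × ℝ | p.2 < p.1 ∧ p.1 < t} :=
    (measurableSet_lt measurable_snd measurable_fst).inter
      (measurableSet_lt measurable_fst measurable_const)
  have hfun : Measurable fun p : ℝ × ℝ => (t - p.1) ^ (a - 1) * (p.1 - p.2) ^ (b - 1) := by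
    fun_prop
  exact hfun.indicator hset

lemma abelCompKernel_nonneg (a b t s r : ℝ) : 0 ≤ abelCompKernel a b t s r :=
  indicator_nonneg (fun _ hs => mul_nonneg (Real.rpow_nonneg (sub_nonneg.2 hs.2.le) _)
    (Real.rpow_nonneg (sub_nonneg.2 hs.1.le) _)) s

lemma integrable_abelCompKernel {r : ℝ} (ha : 0 < a) (hb : 0 < b) (hrt : r < t) :
    Integrable (abelCompKernel a b t · r) :=
  (integrable_indicator_iff measurableSet_Ioo).2
    ((intervalIntegrable_iff_integrableOn_Ioo_of_le hrt.le).1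
      (intervalIntegrable_sub_rpow_mul_sub_rpow ha hb hrt))

lemma setIntegral_abelCompKernel {r : ℝ} (ha : 0 < a) (hb : 0 < b) (hr : r ∈ Ioo 0 t) :
    ∫ s in Ioo 0 t, abelCompKernel a b t s r = beta a b * (t - r) ^ (a + b - 1) := by
  simp only [abelCompKernel]
  rw [setIntegral_indicator measurableSet_Ioo,
    inter_eq_right.2 (Ioo_subset_Ioo_left hr.1.le), ← integral_Ioc_eq_integral_Ioo,
    ← intervalIntegral.integral_of_le hr.2.le, integral_sub_rpow_mul_sub_rpow ha hb hr.2]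

variable {E : Type*} [NormedAddCommGroup E] [NormedSpace ℝ E] {f : ℝ → E}

lemma setIntegral_abelCompKernel_smul {s : ℝ} (hs : s ∈ Ioo 0 t) :
    ∫ r in Ioo 0 t, abelCompKernel a b t s r • f r
      = (t - s) ^ (a - 1) • ∫ r in 0..s, (s - r) ^ (b - 1) • f r := by
  have hkernel : ∀ r, abelCompKernel a b t s r • f r
      = (Iio s).indicator (fun r => (t - s) ^ (a - 1) • (s - r) ^ (b - 1) • f r) r := fun r => by
    by_cases hrs : r < s <;> simp [abelCompKernel, hrs, hs.2, mul_smul]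
  simp only [hkernel]
  rw [setIntegral_indicator measurableSet_Iio, Ioo_inter_Iio, min_eq_right hs.2.le, integral_smul,
    intervalIntegral.integral_of_le hs.1.le, integral_Ioc_eq_integral_Ioo]

variable [CompleteSpace E]

lemma integral_sub_rpow_smul_integral_sub_rpow_smul (ha : 0 < a) (hb : 0 < b) (ht : 0 ≤ t)
    (hf : RiemannLiouvilleIntegrable (a + b) f t) :
    ∫ s in 0..t, (t - s) ^ (a - 1) • ∫ r in 0..s, (s - r) ^ (b - 1) • f r
      = beta a b • ∫ r in 0..t, (t - r) ^ (a + b - 1) • f r := by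
  have hmarginal : EqOn (fun r => (∫ s in Ioo 0 t, abelCompKernel a b t s r) • f r)
      (fun r => beta a b • (t - r) ^ (a + b - 1) • f r) (Ioo 0 t) := fun r hr => by
    simp only [setIntegral_abelCompKernel ha hb hr, mul_smul]
  have hint : IntegrableOn (fun r => (t - r) ^ (a + b - 1) • f r) (Ioo 0 t) :=
    (intervalIntegrable_iff_integrableOn_Ioo_of_le ht).1 hf
  simp only [intervalIntegral.integral_of_le ht, integral_Ioc_eq_integral_Ioo]
  calc ∫ s in Ioo 0 t, (t - s) ^ (a - 1) • ∫ r in 0..s, (s - r) ^ (b - 1) • f r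
      = ∫ s in Ioo 0 t, ∫ r in Ioo 0 t, abelCompKernel a b t s r • f r :=
        (setIntegral_congr_fun measurableSet_Ioo
          fun s hs => setIntegral_abelCompKernel_smul hs).symm
    _ = ∫ r in Ioo 0 t, (∫ s in Ioo 0 t, abelCompKernel a b t s r) • f r := by
        refine integral_integral_smul_swap_of_nonneg (measurable_uncurry_abelCompKernel a b t)
          (abelCompKernel_nonneg a b t) ?_ (hf.aestronglyMeasurable ht)
          (IntegrableOn.congr_fun (hint.smul (beta a b)) hmarginal.symm measurableSet_Ioo)
        filter_upwards [ae_restrict_mem measurableSet_Ioo] with r hr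
        exact (integrable_abelCompKernel ha hb hr.2).integrableOn
    _ = beta a b • ∫ r in Ioo 0 t, (t - r) ^ (a + b - 1) • f r := by
        rw [setIntegral_congr_fun measurableSet_Ioo hmarginal, integral_smul]

theorem riemannLiouville_riemannLiouville (ha : 0 < a) (hb : 0 < b) (ht : 0 ≤ t)
    (hf : RiemannLiouvilleIntegrable (a + b) f t) :
    riemannLiouville a (riemannLiouville b f) t = riemannLiouville (a + b) f t := by
  have hΓa := (Real.Gamma_pos_of_pos ha).ne'
  have hΓb := (Real.Gamma_pos_of_pos hb).ne'
  simp only [riemannLiouville, smul_comm _ (1 / Real.Gamma b), intervalIntegral.integral_smul]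
  rw [integral_sub_rpow_smul_integral_sub_rpow_smul ha hb ht hf, smul_smul, smul_smul, beta]
  congr 1
  field_simp

end Semigroup

section VariationOfConstants

variable {E : Type*} [NormedAddCommGroup E] [NormedSpace ℝ E] {α t : ℝ}

lemma riemannLiouville_rpow_div_Gamma {a β : ℝ} (ha : 0 < a) (hβ : -1 < β) (ht : 0 < t) :
    riemannLiouville a (fun s => s ^ β / Real.Gamma (β + 1)) t
      = t ^ (a + β) / Real.Gamma (a + β + 1) := by
  have hβ' : 0 < β + 1 := by linarith
  have hΓa := (Real.Gamma_pos_of_pos ha).ne'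
  have hΓβ := (Real.Gamma_pos_of_pos hβ').ne'
  have hΓaβ := (Real.Gamma_pos_of_pos (add_pos ha hβ')).ne'
  have hbeta := integral_sub_rpow_mul_sub_rpow ha hβ' ht
  simp only [sub_zero, add_sub_cancel_right, ← add_assoc] at hbeta hΓaβ
  simp only [riemannLiouville, smul_eq_mul, ← mul_div_assoc, intervalIntegral.integral_div, hbeta,
    ProbabilityTheory.beta, ← add_assoc]
  field_simp

lemma hasSum_riemannLiouville_rpow {β : ℝ} (hα : 0 < α) (hβ : -1 < β) (ht : 0 ≤ t) (M : ℝ) :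
    HasSum (fun k : ℕ => M ^ (k + 1) *
        riemannLiouville (α * k + α) (fun s => s ^ β / Real.Gamma (β + 1)) t)
      (t ^ β * mlE α (β + 1) (M * t ^ α) - t ^ β / Real.Gamma (β + 1)) := by
  obtain rfl | ht := ht.eq_or_lt
  · simp [riemannLiouville, Real.zero_rpow hα.ne', mlE_zero_right, div_eq_mul_inv]
  have hseries := (hasSum_nat_add_iff' 1).2
    ((hasSum_mlE hα (β + 1) (M * t ^ α)).mul_left (t ^ β))
  have hlimit : ∑ k ∈ Finset.range 1, t ^ β * ((M * t ^ α) ^ k / Real.Gamma (α * k + (β + 1)))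
      = t ^ β / Real.Gamma (β + 1) := by simp [div_eq_mul_inv]
  rw [hlimit] at hseries
  refine hseries.congr_fun fun k => ?_
  rw [riemannLiouville_rpow_div_Gamma (by positivity) hβ ht, Real.rpow_add ht,
    ← mul_add_one α (k : ℝ), ← Nat.cast_add_one, Real.rpow_mul_natCast ht.le, mul_pow, add_assoc]
  ring

lemma hasSum_pow_smul_riemannLiouville {f : ℝ → E} (hα : 0 < α) (ht : 0 ≤ t)
    (hf : RiemannLiouvilleIntegrable α f t) (M : ℝ) :
    HasSum (fun k : ℕ => M ^ k • riemannLiouville (α * k + α) f t)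
      (∫ τ in 0..t, ((t - τ) ^ (α - 1) * mlE α α (M * (t - τ) ^ α)) • f τ) := by
  have hterm : ∀ k : ℕ, M ^ k • riemannLiouville (α * k + α) f t = ∫ τ in 0..t,
      ((M * (t - τ) ^ α) ^ k / Real.Gamma (α * k + α)) • (t - τ) ^ (α - 1) • f τ := fun k => by
    rw [riemannLiouville, ← intervalIntegral.integral_smul, ← intervalIntegral.integral_smul]
    refine intervalIntegral.integral_congr_Ioo_of_le ht fun τ hτ => ?_
    have hτ' : 0 < t - τ := sub_pos.2 hτ.2
    simp only [smul_smul]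
    rw [add_sub_assoc, Real.rpow_add hτ', Real.rpow_mul_natCast hτ'.le, mul_pow]
    ring_nf
  simp only [hterm, mul_comm _ (mlE _ _ _), mul_smul]
  refine intervalIntegral.hasSum_integral_of_dominated_convergence
    (fun k τ => (|M| * t ^ α) ^ k / Real.Gamma (α * k + α) * ‖(t - τ) ^ (α - 1) • f τ‖)
    (fun k => ?_) (fun k => .of_forall fun τ hτ => ?_)
    (.of_forall fun τ _ => (summable_pow_div_Gamma hα α _).mul_right _) ?_
    (.of_forall fun τ _ => (hasSum_mlE hα α _).smul_const _)
  · have hcoeff : Measurable fun τ => (M * (t - τ) ^ α) ^ k / Real.Gamma (α * k + α) := by fun_prop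
    exact hcoeff.aestronglyMeasurable.smul hf.aestronglyMeasurable_restrict_uIoc
  · rw [uIoc_of_le ht] at hτ
    have hτ' : 0 ≤ t - τ := sub_nonneg.2 hτ.2
    have hΓ : 0 < Real.Gamma (α * k + α) := Real.Gamma_pos_of_pos (by positivity)
    rw [norm_smul, norm_div, norm_pow, norm_mul, Real.norm_eq_abs M, Real.norm_of_nonneg hΓ.le,
      Real.norm_of_nonneg (Real.rpow_nonneg hτ' α)]
    gcongr
    linarith [hτ.1]
  · simp only [tsum_mul_right]
    exact (IntervalIntegrable.norm hf).const_mul _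

variable [CompleteSpace E] {M : ℝ} {y p f : ℝ → E}

lemma hasSum_pow_smul_riemannLiouville_sum_pow_smul (hα : 0 < α) (ht : 0 ≤ t) (M : ℝ) (n : ℕ)
    (c : ℕ → E) :
    HasSum (fun k : ℕ => M ^ (k + 1) • riemannLiouville (α * k + α)
        (fun s => ∑ ℓ ∈ Finset.range n, (s ^ ℓ / (Nat.factorial ℓ : ℝ)) • c ℓ) t)
      ((∑ ℓ ∈ Finset.range n, (t ^ ℓ * mlE α (ℓ + 1) (M * t ^ α)) • c ℓ)
        - ∑ ℓ ∈ Finset.range n, (t ^ ℓ / (Nat.factorial ℓ : ℝ)) • c ℓ) := by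
  have hmonomial : ∀ ℓ ∈ Finset.range n, HasSum (fun k : ℕ => (M ^ (k + 1)
        * riemannLiouville (α * k + α) (fun s => s ^ ℓ / (Nat.factorial ℓ : ℝ)) t) • c ℓ)
      ((t ^ ℓ * mlE α (ℓ + 1) (M * t ^ α) - t ^ ℓ / (Nat.factorial ℓ : ℝ)) • c ℓ) := fun ℓ _ => by
    have hℓ : (-1 : ℝ) < ℓ := neg_one_lt_zero.trans_le ℓ.cast_nonneg
    simpa only [Real.rpow_natCast, Real.Gamma_nat_eq_factorial] using
      (hasSum_riemannLiouville_rpow hα hℓ ht M).smul_const (c ℓ)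
  have hsum := hasSum_sum hmonomial
  simp only [sub_smul, Finset.sum_sub_distrib] at hsum
  refine hsum.congr_fun fun k => ?_
  have hint : ∀ ℓ ∈ Finset.range n, RiemannLiouvilleIntegrable (α * k + α)
      (fun s => s ^ ℓ / (Nat.factorial ℓ : ℝ)) t := fun ℓ _ =>
    riemannLiouvilleIntegrable_of_continuousOn (by positivity) (by fun_prop)
  rw [riemannLiouville_sum_smul_const _ hint, Finset.smul_sum]
  simp only [mul_smul]

/- With `h = M y + f` one has `y = p + J^α h`, so applying `J^b` gives
`M J^b p + J^b f = J^b h - M J^(b+α) h`; for `b = (k+1)α` the weighted sum over `k` telescopes. -/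
lemma hasSum_of_eq_add_riemannLiouville (hα : 0 < α) (ht : 0 ≤ t)
    (hy : RiemannLiouvilleIntegrable α y t) (hp : RiemannLiouvilleIntegrable α p t)
    (hf : RiemannLiouvilleIntegrable α f t)
    (heq : ∀ s ∈ Icc 0 t, y s = p s + riemannLiouville α (fun r => M • y r + f r) s) :
    HasSum (fun k : ℕ => M ^ k •
        (M • riemannLiouville (α * k + α) p t + riemannLiouville (α * k + α) f t))
      (y t - p t) := by
  set h : ℝ → E := fun r => M • y r + f r
  have hh : RiemannLiouvilleIntegrable α h t := (hy.const_smul M).add hf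
  set u : ℕ → E := fun k => M ^ k • riemannLiouville (α * k + α) h t with hu
  have hu_zero : u 0 = y t - p t := by simp [hu, heq t (right_mem_Icc.2 ht)]
  have hu_sum : HasSum u _ := hasSum_pow_smul_riemannLiouville hα ht hh M
  have htelescope : HasSum (fun k => u k - u (k + 1)) (y t - p t) := by
    have hdiff := hu_sum.sub ((hasSum_nat_add_iff' 1).2 hu_sum)
    rwa [Finset.sum_range_one, sub_sub_cancel, hu_zero] at hdiff
  refine htelescope.congr_fun fun k => ?_
  have hb : 0 < α * k + α := by positivity
  have hαb : α ≤ α * k + α := le_add_of_nonneg_left (by positivity)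
  have hconv : riemannLiouville (α * k + α) y t - riemannLiouville (α * k + α) p t
      = riemannLiouville (α * k + α + α) h t := by
    rw [← riemannLiouville_sub (hy.mono ht hαb) (hp.mono ht hαb),
      ← riemannLiouville_riemannLiouville hb hα ht (hh.mono ht (by linarith))]
    exact riemannLiouville_congr ht fun s hs => sub_eq_of_eq_add' (heq s hs)
  have hadd : riemannLiouville (α * k + α) h t
      = M • riemannLiouville (α * k + α) y t + riemannLiouville (α * k + α) f t := by
    rw [riemannLiouville_add ((hy.const_smul M).mono ht hαb) (hf.mono ht hαb),
      riemannLiouville_const_smul]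
  simp only [hu, Nat.cast_add_one, mul_add_one, ← hconv, hadd, pow_succ]
  module

theorem variation_of_constants_general_general (hα : 0 < α) (ht : 0 ≤ t) (n : ℕ) (c : ℕ → E)
    (hy : RiemannLiouvilleIntegrable α y t) (hf : RiemannLiouvilleIntegrable α f t)
    (heq : ∀ s ∈ Icc 0 t, y s = (∑ ℓ ∈ Finset.range n, (s ^ ℓ / (Nat.factorial ℓ : ℝ)) • c ℓ)
      + riemannLiouville α (fun r => M • y r + f r) s) :
    y t = (∑ ℓ ∈ Finset.range n, (t ^ ℓ * mlE α ((ℓ : ℝ) + 1) (M * t ^ α)) • c ℓ)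
      + ∫ τ in 0..t, ((t - τ) ^ (α - 1) * mlE α α (M * (t - τ) ^ α)) • f τ := by
  have hp := hasSum_pow_smul_riemannLiouville_sum_pow_smul hα ht M n c
  have hf_sum := hasSum_pow_smul_riemannLiouville hα ht hf M
  have hsum := hasSum_of_eq_add_riemannLiouville hα ht hy
    (riemannLiouvilleIntegrable_of_continuousOn hα (by fun_prop)) hf heq
  simp only [smul_add, smul_smul, ← pow_succ] at hsum
  have huniq := hsum.unique (hp.add hf_sum)
  rwa [sub_add_eq_add_sub, sub_left_inj] at huniq

end VariationOfConstants

/-- General variation-of-constants formula for `D^α y = M y + g(t,y)` with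
arbitrary `α > 0` and `m = ⌈α⌉` initial data. -/
theorem variation_of_constants_general
    (α T M L : ℝ) (hα : 0 < α) (hT : 0 < T) (yv : ℕ → ℝ)
    (g : ℝ → ℝ → ℝ)
    (hg_cont : ContinuousOn (fun p : ℝ × ℝ => g p.1 p.2) (Set.Icc 0 T ×ˢ Set.univ))
    (hg_lip : ∀ t ∈ Set.Icc (0 : ℝ) T, ∀ x y : ℝ, |g t x - g t y| ≤ L * |x - y|)
    (y : ℝ → ℝ) (hy_cont : ContinuousOn y (Set.Icc 0 T))
    (hy : ∀ t ∈ Set.Icc (0 : ℝ) T,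
      y t = (∑ ℓ ∈ Finset.range ⌈α⌉₊, yv ℓ * t ^ ℓ / (Nat.factorial ℓ : ℝ))
        + (1 / Real.Gamma α)
          * ∫ s in (0 : ℝ)..t, (t - s) ^ (α - 1) * (M * y s + g s (y s))) :
    ∀ t ∈ Set.Icc (0 : ℝ) T,
      y t = (∑ ℓ ∈ Finset.range ⌈α⌉₊, yv ℓ * t ^ ℓ * mlE α ((ℓ : ℝ) + 1) (M * t ^ α))
        + ∫ τ in (0 : ℝ)..t, (t - τ) ^ (α - 1) * mlE α α (M * (t - τ) ^ α) * g τ (y τ) := by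
  intro t ht
  have hsub : uIcc 0 t ⊆ Icc 0 T := uIcc_of_le ht.1 ▸ Icc_subset_Icc_right ht.2
  have hgy : ContinuousOn (fun s => g s (y s)) (Icc 0 T) :=
    hg_cont.comp (continuousOn_id.prodMk hy_cont) fun s hs => ⟨hs, mem_univ _⟩
  have hformula := variation_of_constants_general_general hα ht.1 ⌈α⌉₊ yv
    (riemannLiouvilleIntegrable_of_continuousOn hα (hy_cont.mono hsub))
    (riemannLiouvilleIntegrable_of_continuousOn hα (hgy.mono hsub)) (M := M) fun s hs => by
      simpa [riemannLiouville, mul_comm, mul_div_assoc] using hy s ⟨hs.1, hs.2.trans ht.2⟩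
  simpa [mul_comm, mul_assoc, mul_left_comm] using hformula
end

section
/- Let α ∈ (1,2), T > 0, let a : [0,T] → ℝ be continuous, set L := max_{t∈[0,T]} |a(t)|, and for t ∈ [0,T] define a*(t) := max_{τ∈[0,t]} a(τ). Let y₁, y₂ : [0,T] → ℝ be continuous and satisfy yₖ(t) = y_{k,0} + y_{k,1} t + (1/Γ(α)) ∫₀ᵗ (t−s)^{α−1} a(s) yₖ(s) ds for k = 1, 2, with y_{1,0} ≤ y_{2,0} and y_{1,1} ≤ y_{2,1}. Suppose T* ∈ (0,T] is such that for all t ∈ [0,T*]: E_{α,α}(−L t^α) > 0 and either [(y_{2,0} − y_{1,0}) E_{α,1}(−L t^α) + (y_{2,1} − y_{1,1}) t E_{α,2}(−L t^α) > 0] or [y_{1,0} = y_{2,0}, y_{1,1} < y_{2,1}, and E_{α,2}(−L t^α) > 0]. Then for all t ∈ [0,T*]: |y₂(t) − y₁(t)| ≤ |y_{2,0} − y_{1,0}| · E_{α,1}(a*(t) t^α) + |y_{2,1} − y_{1,1}| · t E_{α,2}(a*(t) t^α). -/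
/-!
The difference `z = y₂ - y₁` solves `D ^ α z = a z`. For a constant `c`, read this as
`D ^ α z = c z + (a - c) z`: the kernel `t ^ (α - 1) E_{α,α}(c t ^ α)` is the resolvent of
`t ^ (α - 1) / Γ(α)`, so variation of constants gives
`z(t) = z(0) E_{α,1}(c t ^ α) + z'(0) t E_{α,2}(c t ^ α)
  + ∫₀ᵗ (t - s) ^ (α - 1) E_{α,α}(c (t - s) ^ α) (a(s) - c) z(s) ds`.
With a lower bound `c = m` of `a` the kernel and the free term are nonnegative, and a Gronwall
argument for the negative part of `z` yields `z ≥ 0`. With an upper bound `c = M` of `a` on `[0, t]`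
the integral is then nonpositive, which is the claim.
-/

open MeasureTheory Set Filter Function

section MittagLeffler

variable {α β : ℝ}

lemma factorial_le_Gamma (hα : 1 ≤ α) (hβ : 1 ≤ β) {n : ℕ} (hn : n ≠ 0) :
    (n.factorial : ℝ) ≤ Real.Gamma (α * n + β) := by
  have h1 : (1 : ℝ) ≤ n := by exact_mod_cast Nat.one_le_iff_ne_zero.2 hn
  have hle : (n : ℝ) + 1 ≤ α * n + β := by nlinarith
  rw [← Real.Gamma_nat_eq_factorial]
  exact Real.Gamma_strictMonoOn_Ici.monotoneOn (mem_Ici.2 (by linarith))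
    (mem_Ici.2 (by linarith)) hle

lemma summable_mlE (hα : 1 ≤ α) (hβ : 1 ≤ β) (z : ℝ) :
    Summable fun n : ℕ => z ^ n / Real.Gamma (α * n + β) := by
  rw [← summable_nat_add_iff 1]
  refine Summable.of_norm_bounded ((summable_nat_add_iff 1).2
    (Real.summable_pow_div_factorial |z|)) fun n => ?_
  have hΓ := factorial_le_Gamma hα hβ n.succ_ne_zero
  have hpos : (0 : ℝ) < (n + 1).factorial := by positivity
  rw [norm_div, norm_pow, Real.norm_eq_abs, Real.norm_of_nonneg (hpos.le.trans hΓ)]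
  gcongr

lemma continuous_mlE (hα : 1 ≤ α) (hβ : 1 ≤ β) : Continuous (mlE α β) := by
  refine continuous_iff_continuousAt.2 fun z => ?_
  refine ContinuousOn.continuousAt (s := Metric.closedBall 0 (|z| + 1))
    (continuousOn_tsum (fun n => by fun_prop) (summable_mlE hα hβ (|z| + 1)) fun n x hx => ?_)
    (mem_of_superset (Metric.isOpen_ball.mem_nhds (by simp)) Metric.ball_subset_closedBall)
  have hΓ : 0 ≤ Real.Gamma (α * n + β) := Real.Gamma_nonneg_of_nonneg (by positivity)
  rw [mem_closedBall_zero_iff] at hx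
  rw [norm_div, norm_pow, Real.norm_of_nonneg hΓ]
  gcongr

lemma mlE_nonneg (hα : 0 ≤ α) (hβ : 0 ≤ β) {z : ℝ} (hz : 0 ≤ z) : 0 ≤ mlE α β z :=
  tsum_nonneg fun n => div_nonneg (pow_nonneg hz n) (Real.Gamma_nonneg_of_nonneg (by positivity))

lemma mlE_mul_rpow_nonneg_of_le (hα : 0 < α) (hβ : 0 ≤ β) {m c T : ℝ}
    (h : ∀ t ∈ Icc 0 T, 0 ≤ mlE α β (m * t ^ α)) (hmc : m ≤ c) :
    ∀ t ∈ Icc 0 T, 0 ≤ mlE α β (c * t ^ α) := by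
  intro t ht
  have htα : 0 ≤ t ^ α := Real.rpow_nonneg ht.1 α
  rcases le_total 0 c with hc | hc
  · exact mlE_nonneg hα.le hβ (mul_nonneg hc htα)
  -- For `c ≤ 0`, going from `m` to `c` only rescales time: `c t ^ α = m s ^ α` for some `s ≤ t`.
  have hcont : ContinuousOn (fun s => -(m * s ^ α)) (Icc 0 t) :=
    ((Real.continuous_rpow_const hα.le).const_mul m).neg.continuousOn
  obtain ⟨s, hs, hst⟩ := intermediate_value_Icc ht.1 hcont
    (show -(c * t ^ α) ∈ Icc _ _ by
      simp only [Real.zero_rpow hα.ne', mul_zero, neg_zero]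
      exact ⟨by nlinarith, by nlinarith⟩)
  rw [← neg_inj.1 hst]
  exact h s ⟨hs.1, hs.2.trans ht.2⟩

end MittagLeffler

lemma integral_integral_triangle_swap {E : Type*} [NormedAddCommGroup E] [NormedSpace ℝ E]
    {F : ℝ → ℝ → E} (hF : Continuous (uncurry F)) {a b : ℝ} (hab : a ≤ b) :
    ∫ s in a..b, ∫ r in a..s, F s r = ∫ r in a..b, ∫ s in r..b, F s r := by
  let G : ℝ → ℝ → E := fun s r => {p : ℝ × ℝ | p.2 < p.1}.indicator (uncurry F) (s, r)
  have hG : IntegrableOn (uncurry G) (uIoc a b ×ˢ uIoc a b) :=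
    ((hF.continuousOn.integrableOn_compact (isCompact_uIcc.prod isCompact_uIcc)).mono_set
      (prod_mono uIoc_subset_uIcc uIoc_subset_uIcc)).indicator
        (measurableSet_lt measurable_snd measurable_fst)
  have inner_left : ∀ s ∈ uIcc a b, ∫ r in a..b, G s r = ∫ r in a..s, F s r := by
    intro s hs
    rw [uIcc_of_le hab] at hs
    have hset : Ioc a b ∩ Iio s = Ioo a s := by
      ext r
      simp only [mem_inter_iff, mem_Ioc, mem_Iio, mem_Ioo]
      grind
    rw [intervalIntegral.integral_of_le hab, intervalIntegral.integral_of_le hs.1,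
      integral_Ioc_eq_integral_Ioo (y := s), ← hset, ← setIntegral_indicator measurableSet_Iio]
    rfl
  have inner_right : ∀ r ∈ uIcc a b, ∫ s in a..b, G s r = ∫ s in r..b, F s r := by
    intro r hr
    rw [uIcc_of_le hab] at hr
    have hset : Ioc a b ∩ Ioi r = Ioc r b := by rw [Ioc_inter_Ioi, max_eq_right hr.1]
    rw [intervalIntegral.integral_of_le hab, intervalIntegral.integral_of_le hr.2, ← hset,
      ← setIntegral_indicator measurableSet_Ioi]
    rfl
  rw [← intervalIntegral.integral_congr inner_left, ← intervalIntegral.integral_congr inner_right,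
    intervalIntegral_intervalIntegral_swap hG]

/-- The Volterra convolution `(k ∗ f)(t) = ∫₀ᵗ k(t - s) f(s) ds`. -/
noncomputable def volterraConv (k f : ℝ → ℝ) (t : ℝ) : ℝ := ∫ s in (0 : ℝ)..t, k (t - s) * f s

section VolterraConv

variable {k l f g : ℝ → ℝ} {t : ℝ}

lemma continuous_volterraConv (hk : Continuous k) (hf : Continuous f) :
    Continuous (volterraConv k f) :=
  intervalIntegral.continuous_parametric_intervalIntegral_of_continuous
    (f := fun t s => k (t - s) * f s) (by fun_prop) continuous_id

lemma volterraConv_comm (k f : ℝ → ℝ) : volterraConv k f = volterraConv f k := by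
  ext t
  have h := intervalIntegral.integral_comp_sub_left (a := 0) (b := t)
    (fun s => k (t - s) * f s) t
  simpa [volterraConv, mul_comm] using h.symm

lemma volterraConv_congr_right (ht : 0 ≤ t) (h : EqOn f g (Icc 0 t)) :
    volterraConv k f t = volterraConv k g t :=
  intervalIntegral.integral_congr fun s hs => by simp only [h (uIcc_of_le ht ▸ hs)]

lemma volterraConv_congr_left (ht : 0 ≤ t) (h : EqOn k l (Icc 0 t)) :
    volterraConv k f t = volterraConv l f t := by
  rw [volterraConv_comm k, volterraConv_comm l, volterraConv_congr_right ht h]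

lemma volterraConv_smul_right (c : ℝ) (k f : ℝ → ℝ) :
    volterraConv k (c • f) = c • volterraConv k f := by
  ext t
  simp [volterraConv, mul_left_comm]

lemma volterraConv_smul_left (c : ℝ) (k f : ℝ → ℝ) :
    volterraConv (c • k) f = c • volterraConv k f := by
  rw [volterraConv_comm, volterraConv_smul_right, volterraConv_comm]

lemma volterraConv_add_right (hk : Continuous k) (hf : Continuous f) (hg : Continuous g) :
    volterraConv k (f + g) = volterraConv k f + volterraConv k g := by
  ext t
  simp only [volterraConv, Pi.add_apply, mul_add]
  exact intervalIntegral.integral_add (Continuous.intervalIntegrable (by fun_prop) _ _)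
    (Continuous.intervalIntegrable (by fun_prop) _ _)

lemma volterraConv_add_left (hk : Continuous k) (hl : Continuous l) (hf : Continuous f) :
    volterraConv (k + l) f = volterraConv k f + volterraConv l f := by
  rw [volterraConv_comm, volterraConv_add_right hf hk hl, volterraConv_comm f, volterraConv_comm f]

lemma volterraConv_assoc (hk : Continuous k) (hl : Continuous l) (hf : Continuous f)
    (ht : 0 ≤ t) :
    volterraConv k (volterraConv l f) t = volterraConv (volterraConv k l) f t := by
  have inner (r : ℝ) :
      ∫ s in r..t, k (t - s) * (l (s - r) * f r) = volterraConv k l (t - r) * f r := by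
    have shift := intervalIntegral.integral_comp_sub_right (a := r) (b := t)
      (fun s => k (t - r - s) * l s) r
    simp only [sub_sub_sub_cancel_right, sub_self] at shift
    simp only [volterraConv, ← shift, ← mul_assoc, intervalIntegral.integral_mul_const]
  calc volterraConv k (volterraConv l f) t
      = ∫ s in (0 : ℝ)..t, ∫ r in (0 : ℝ)..s, k (t - s) * (l (s - r) * f r) := by
        simp only [volterraConv, intervalIntegral.integral_const_mul]
    _ = ∫ r in (0 : ℝ)..t, ∫ s in r..t, k (t - s) * (l (s - r) * f r) :=
        integral_integral_triangle_swap
          (F := fun s r => k (t - s) * (l (s - r) * f r)) (by fun_prop) ht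
    _ = volterraConv (volterraConv k l) f t := by simp only [inner, volterraConv]

end VolterraConv

/-- `r` is the resolvent of the convolution kernel `k` with parameter `c` on `[0, T]`: it satisfies
`r = k + c (r ∗ k)`, so that `z = F + c (k ∗ z)` is solved by `z = F + c (r ∗ F)`. -/
def IsVolterraResolvent (c T : ℝ) (k r : ℝ → ℝ) : Prop :=
  EqOn r (k + c • volterraConv r k) (Icc 0 T)

namespace IsVolterraResolvent

variable {c T : ℝ} {k r : ℝ → ℝ}

lemma volterraConv_eqOn {f : ℝ → ℝ} (h : IsVolterraResolvent c T k r) (hk : Continuous k)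
    (hr : Continuous r) (hf : Continuous f) :
    EqOn (volterraConv r f) (volterraConv k f + c • volterraConv r (volterraConv k f))
      (Icc 0 T) := by
  intro t ht
  have hrk := continuous_volterraConv hr hk
  rw [volterraConv_congr_left ht.1 (EqOn.mono (Icc_subset_Icc_right ht.2) h),
    volterraConv_add_left hk (hrk.const_smul c) hf, volterraConv_smul_left]
  simp [volterraConv_assoc hr hk hf ht.1]

lemma solution_eqOn {F z : ℝ → ℝ} (h : IsVolterraResolvent c T k r) (hk : Continuous k)
    (hr : Continuous r) (hF : Continuous F) (hz : Continuous z)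
    (hsol : EqOn z (F + c • volterraConv k z) (Icc 0 T)) :
    EqOn z (F + c • volterraConv r F) (Icc 0 T) := by
  intro t ht
  have hkz := continuous_volterraConv hk hz
  have expand_z : volterraConv r z t
      = volterraConv r F t + c * volterraConv r (volterraConv k z) t := by
    rw [volterraConv_congr_right ht.1 (hsol.mono (Icc_subset_Icc_right ht.2)),
      volterraConv_add_right hr hF (hkz.const_smul c), volterraConv_smul_right]
    simp
  have expand_r : volterraConv r z t
      = volterraConv k z t + c * volterraConv r (volterraConv k z) t :=
    h.volterraConv_eqOn hk hr hz ht
  have key : volterraConv k z t = volterraConv r F t := by linarith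
  simp [hsol ht, key]

end IsVolterraResolvent

/-- The kernel `t ^ (p - 1) / Γ(p)` of the fractional integral of order `p`. Negative arguments are
sent to `0`, so that it is continuous on `ℝ` for `p ≥ 1`; `volterraConv` never sees them. -/
noncomputable def powerKernel (p t : ℝ) : ℝ := max t 0 ^ (p - 1) / Real.Gamma p

/-- The Mittag-Leffler kernel `t ^ (β - 1) E_{α,β}(c t ^ α)`, with negative arguments sent to `0` as
in `powerKernel`. For `β = α` it is the resolvent of `powerKernel α` with parameter `c`. -/
noncomputable def mlKernel (α β c t : ℝ) : ℝ := max t 0 ^ (β - 1) * mlE α β (c * max t 0 ^ α)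

section PowerKernel

variable {p q t : ℝ}

lemma continuous_powerKernel (hp : 1 ≤ p) : Continuous (powerKernel p) :=
  ((continuous_id.max continuous_const).rpow_const fun _ => Or.inr (sub_nonneg.2 hp)).div_const _

lemma powerKernel_nonneg (hp : 0 ≤ p) (t : ℝ) : 0 ≤ powerKernel p t :=
  div_nonneg (Real.rpow_nonneg (le_max_right _ _) _) (Real.Gamma_nonneg_of_nonneg hp)

lemma monotone_powerKernel (hp : 1 ≤ p) : Monotone (powerKernel p) := by
  intro s t hst
  have := Real.Gamma_nonneg_of_nonneg (zero_le_one.trans hp)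
  unfold powerKernel
  gcongr

lemma powerKernel_of_nonneg (ht : 0 ≤ t) : powerKernel p t = t ^ (p - 1) / Real.Gamma p := by
  rw [powerKernel, max_eq_left ht]

lemma powerKernel_one (t : ℝ) : powerKernel 1 t = 1 := by simp [powerKernel]

lemma powerKernel_two (ht : 0 ≤ t) : powerKernel 2 t = t := by
  norm_num [powerKernel_of_nonneg ht, Real.Gamma_two]

lemma integral_rpow_mul_sub_rpow_s7 (hp : 0 < p) (hq : 0 < q) (ht : 0 < t) :
    ∫ s in (0 : ℝ)..t, s ^ (p - 1) * (t - s) ^ (q - 1)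
      = t ^ (p + q - 1) * (Real.Gamma p * Real.Gamma q / Real.Gamma (p + q)) := by
  have h := Complex.betaIntegral_scaled p q ht
  rw [Complex.betaIntegral_eq_Gamma_mul_div _ _ (by simpa) (by simpa)] at h
  apply Complex.ofReal_injective
  rw [← intervalIntegral.integral_ofReal]
  convert h using 1
  · refine intervalIntegral.integral_congr fun s hs => ?_
    rw [uIcc_of_le ht.le] at hs
    simp [Complex.ofReal_cpow hs.1, Complex.ofReal_cpow (sub_nonneg.2 hs.2)]
  · simp [Complex.ofReal_cpow ht.le, ← Complex.Gamma_ofReal]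

lemma volterraConv_powerKernel (hp : 1 ≤ p) (hq : 1 ≤ q) (ht : 0 ≤ t) :
    volterraConv (powerKernel p) (powerKernel q) t = powerKernel (p + q) t := by
  have hp0 : 0 < p := zero_lt_one.trans_le hp
  have hq0 : 0 < q := zero_lt_one.trans_le hq
  rcases ht.eq_or_lt with rfl | ht
  · simp [volterraConv, powerKernel, Real.zero_rpow (show p + q - 1 ≠ 0 by linarith)]
  have hΓp := (Real.Gamma_pos_of_pos hp0).ne'
  have hΓq := (Real.Gamma_pos_of_pos hq0).ne'
  calc volterraConv (powerKernel p) (powerKernel q) t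
      = ∫ s in (0 : ℝ)..t,
          s ^ (q - 1) * (t - s) ^ (p - 1) / (Real.Gamma q * Real.Gamma p) := by
        refine intervalIntegral.integral_congr fun s hs => ?_
        rw [uIcc_of_le ht.le] at hs
        simp only [powerKernel_of_nonneg hs.1, powerKernel_of_nonneg (sub_nonneg.2 hs.2)]
        field_simp
    _ = powerKernel (p + q) t := by
        rw [intervalIntegral.integral_div, integral_rpow_mul_sub_rpow_s7 hq0 hp0 ht,
          powerKernel_of_nonneg ht.le, add_comm q p]
        field_simp

end PowerKernel

section MittagLefflerKernel

variable {α β c t : ℝ}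

lemma mlKernel_one (ht : 0 ≤ t) : mlKernel α 1 c t = mlE α 1 (c * t ^ α) := by
  simp [mlKernel, ht]

lemma mlKernel_two (ht : 0 ≤ t) : mlKernel α 2 c t = t * mlE α 2 (c * t ^ α) := by
  norm_num [mlKernel, ht]

lemma mlKernel_nonneg {T : ℝ} (h : ∀ t ∈ Icc 0 T, 0 ≤ mlE α β (c * t ^ α)) (ht : t ∈ Icc 0 T) :
    0 ≤ mlKernel α β c t := by
  rw [mlKernel, max_eq_left ht.1]
  exact mul_nonneg (Real.rpow_nonneg ht.1 _) (h t ht)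

lemma continuous_mlKernel (hα : 1 ≤ α) (hβ : 1 ≤ β) (c : ℝ) : Continuous (mlKernel α β c) := by
  have hmax : Continuous fun t : ℝ => max t 0 := by fun_prop
  exact (hmax.rpow_const fun _ => Or.inr (sub_nonneg.2 hβ)).mul ((continuous_mlE hα hβ).comp
    ((hmax.rpow_const fun _ => Or.inr (zero_le_one.trans hα)).const_mul c))

lemma hasSum_mlKernel (hα : 1 ≤ α) (hβ : 1 ≤ β) (c t : ℝ) :
    HasSum (fun n : ℕ => c ^ n * powerKernel (α * n + β) t) (mlKernel α β c t) := by
  have hmax : 0 ≤ max t 0 := le_max_right t 0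
  have hterm (n : ℕ) : max t 0 ^ (β - 1) * ((c * max t 0 ^ α) ^ n / Real.Gamma (α * n + β))
      = c ^ n * powerKernel (α * n + β) t := by
    have hn : 0 ≤ α * n := by positivity
    rw [powerKernel, add_sub_assoc, Real.rpow_add_of_nonneg hmax hn (sub_nonneg.2 hβ),
      Real.rpow_mul_natCast hmax, mul_pow]
    ring
  simp only [← hterm]
  exact (summable_mlE hα hβ (c * max t 0 ^ α)).hasSum.mul_left (max t 0 ^ (β - 1))

lemma hasSum_volterraConv_mlKernel (hα : 1 ≤ α) (hβ : 1 ≤ β) (c : ℝ) {f : ℝ → ℝ}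
    (hf : Continuous f) (ht : 0 ≤ t) :
    HasSum (fun n : ℕ => c ^ n * volterraConv (powerKernel (α * n + β)) f t)
      (volterraConv (mlKernel α β c) f t) := by
  have hp (n : ℕ) : 1 ≤ α * n + β := le_add_of_nonneg_of_le (by positivity) hβ
  have hmaj : HasSum (fun n : ℕ => |c| ^ n * powerKernel (α * n + β) t) (mlKernel α β |c| t) :=
    hasSum_mlKernel hα hβ |c| t
  simp only [volterraConv, ← intervalIntegral.integral_const_mul, ← mul_assoc]
  refine intervalIntegral.hasSum_integral_of_dominated_convergence
    (fun n s => |c| ^ n * powerKernel (α * n + β) t * |f s|) (fun n => ?_)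
    (fun n => .of_forall fun s hs => ?_) (.of_forall fun s _ => hmaj.summable.mul_right _) ?_
    (.of_forall fun s _ => (hasSum_mlKernel hα hβ c (t - s)).mul_right (f s))
  · have := continuous_powerKernel (hp n)
    exact Continuous.aestronglyMeasurable (by fun_prop)
  · rw [uIoc_of_le ht] at hs
    have hmono := monotone_powerKernel (hp n) (sub_le_self t hs.1.le)
    simp only [norm_mul, norm_pow, Real.norm_eq_abs,
      abs_of_nonneg (powerKernel_nonneg (zero_le_one.trans (hp n)) _)]
    gcongr
  · simp only [tsum_mul_right]
    exact (hf.abs.const_mul _).intervalIntegrable _ _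

lemma mlKernel_eq_powerKernel_add (hα : 1 ≤ α) (hβ : 1 ≤ β) (c T : ℝ) :
    EqOn (mlKernel α β c)
      (powerKernel β + c • volterraConv (mlKernel α α c) (powerKernel β)) (Icc 0 T) := by
  intro t ht
  have htail : HasSum (fun n : ℕ => c ^ (n + 1) * powerKernel (α * (n + 1 : ℕ) + β) t)
      (mlKernel α β c t - powerKernel β t) := by
    simpa using (hasSum_nat_add_iff' 1).2 (hasSum_mlKernel hα hβ c t)
  have hconv := (hasSum_volterraConv_mlKernel hα hα c (continuous_powerKernel hβ) ht.1).mul_left c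
  have hterm (n : ℕ) : c * (c ^ n * volterraConv (powerKernel (α * n + α)) (powerKernel β) t)
      = c ^ (n + 1) * powerKernel (α * (n + 1 : ℕ) + β) t := by
    have hn : 1 ≤ α * n + α := le_add_of_nonneg_of_le (by positivity) hα
    rw [volterraConv_powerKernel hn hβ ht.1]
    push_cast
    ring_nf
  simp only [hterm] at hconv
  simpa using sub_eq_iff_eq_add'.1 (htail.unique hconv)

lemma isVolterraResolvent_mlKernel (hα : 1 ≤ α) (c T : ℝ) :
    IsVolterraResolvent c T (powerKernel α) (mlKernel α α c) :=
  mlKernel_eq_powerKernel_add hα hα c T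

end MittagLefflerKernel

lemma eq_zero_of_le_mul_integral {f : ℝ → ℝ} {C T : ℝ} (hf : Continuous f)
    (hf0 : ∀ t ∈ Icc 0 T, 0 ≤ f t) (h : ∀ t ∈ Icc 0 T, f t ≤ C * ∫ s in (0 : ℝ)..t, f s) :
    ∀ t ∈ Icc 0 T, f t = 0 := by
  have hderiv (t : ℝ) : HasDerivAt (fun t => ∫ s in (0 : ℝ)..t, f s) (f t) t :=
    (hf.integral_hasStrictDerivAt 0 t).hasDerivAt
  have hint : ∀ t ∈ Icc 0 T, ∫ s in (0 : ℝ)..t, f s = 0 := by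
    refine eq_zero_of_abs_deriv_le_mul_abs_self_of_eq_zero_right (K := C)
      (fun t _ => (hderiv t).continuousAt.continuousWithinAt)
      (fun t _ => (hderiv t).hasDerivWithinAt) intervalIntegral.integral_same fun t ht => ?_
    have ht' := Ico_subset_Icc_self ht
    have hnonneg : 0 ≤ ∫ s in (0 : ℝ)..t, f s := intervalIntegral.integral_nonneg ht.1
      fun s hs => hf0 s ⟨hs.1, hs.2.trans ht'.2⟩
    rw [Real.norm_of_nonneg (hf0 t ht'), Real.norm_of_nonneg hnonneg]
    exact h t ht'
  intro t ht
  exact le_antisymm (by simpa [hint t ht] using h t ht) (hf0 t ht)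

lemma nonneg_of_integral_mul_le {K : ℝ → ℝ → ℝ} {z : ℝ → ℝ} {T : ℝ} (hK : Continuous (uncurry K))
    (hz : Continuous z) (hK0 : ∀ t ∈ Icc 0 T, ∀ s ∈ Icc 0 t, 0 ≤ K t s)
    (h : ∀ t ∈ Icc 0 T, ∫ s in (0 : ℝ)..t, K t s * z s ≤ z t) : ∀ t ∈ Icc 0 T, 0 ≤ z t := by
  obtain ⟨C, hC⟩ := ((isCompact_Icc (a := 0) (b := T)).prod (isCompact_Icc (a := 0) (b := T))
    ).exists_bound_of_continuousOn hK.continuousOn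
  have hneg : Continuous fun t => (z t)⁻ := continuous_negPart.comp hz
  have hle : ∀ t ∈ Icc 0 T, (z t)⁻ ≤ C * ∫ s in (0 : ℝ)..t, (z s)⁻ := by
    intro t ht
    have hKt : Continuous (K t) := hK.comp (Continuous.prodMk_right t)
    rw [← intervalIntegral.integral_const_mul]
    have hpointwise : ∀ s ∈ Icc 0 t, -(K t s * z s) ≤ C * (z s)⁻ ∧ 0 ≤ C * (z s)⁻ := by
      intro s hs
      have hKC : K t s ≤ C := (le_abs_self _).trans (hC (t, s) ⟨ht, hs.1, hs.2.trans ht.2⟩)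
      have hK0' := hK0 t ht s hs
      have h1 := neg_le_negPart (z s)
      have h2 := negPart_nonneg (z s)
      constructor <;> nlinarith
    refine sup_le ?_ (intervalIntegral.integral_nonneg ht.1 fun s hs => (hpointwise s hs).2)
    calc -z t ≤ ∫ s in (0 : ℝ)..t, -(K t s * z s) := by
          rw [intervalIntegral.integral_neg]
          exact neg_le_neg (h t ht)
      _ ≤ ∫ s in (0 : ℝ)..t, C * (z s)⁻ :=
          intervalIntegral.integral_mono_on ht.1 ((hKt.mul hz).neg.intervalIntegrable _ _)
            ((hneg.const_mul C).intervalIntegrable _ _) fun s hs => (hpointwise s hs).1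
  exact fun t ht => negPart_eq_zero.1
    (eq_zero_of_le_mul_integral hneg (fun t _ => negPart_nonneg _) hle t ht)

/-- The Volterra form of the linear Caputo initial value problem `D ^ α y = a y`, `y 0 = y₀`,
`y' 0 = y₁` on `[0, T]`. Continuity of `y` is assumed separately where it is needed. -/
def IsLinearCaputoSolution (α T : ℝ) (a : ℝ → ℝ) (y₀ y₁ : ℝ) (y : ℝ → ℝ) : Prop :=
  ∀ t ∈ Icc (0 : ℝ) T, y t = y₀ + y₁ * t
    + (1 / Real.Gamma α) * ∫ s in (0 : ℝ)..t, (t - s) ^ (α - 1) * (a s * y s)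

namespace IsLinearCaputoSolution

variable {α T m M t y₀ y₁ z₀ z₁ : ℝ} {a b y z : ℝ → ℝ}

lemma congr (hy : IsLinearCaputoSolution α T a y₀ y₁ y) (hab : EqOn b a (Icc 0 T))
    (hyz : EqOn z y (Icc 0 T)) : IsLinearCaputoSolution α T b y₀ y₁ z := by
  intro t ht
  rw [hyz ht, hy t ht]
  congr 2
  refine intervalIntegral.integral_congr fun s hs => ?_
  rw [uIcc_of_le ht.1] at hs
  have hsT : s ∈ Icc 0 T := ⟨hs.1, hs.2.trans ht.2⟩
  simp only [hab hsT, hyz hsT]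

lemma sub (hα : 1 ≤ α) (ha : Continuous a) (hyc : Continuous y) (hzc : Continuous z)
    (hy : IsLinearCaputoSolution α T a y₀ y₁ y) (hz : IsLinearCaputoSolution α T a z₀ z₁ z) :
    IsLinearCaputoSolution α T a (y₀ - z₀) (y₁ - z₁) (y - z) := by
  intro t ht
  have hint {w : ℝ → ℝ} (hw : Continuous w) :
      IntervalIntegrable (fun s => (t - s) ^ (α - 1) * (a s * w s)) volume 0 t :=
    (((continuous_const.sub continuous_id).rpow_const fun _ => Or.inr (sub_nonneg.2 hα)).mul
      (ha.mul hw)).intervalIntegrable _ _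
  simp only [Pi.sub_apply, mul_sub, intervalIntegral.integral_sub (hint hyc) (hint hzc)]
  rw [hy t ht, hz t ht]
  ring

lemma eqOn_volterraConv (hy : IsLinearCaputoSolution α T a y₀ y₁ y) :
    EqOn y (y₀ • powerKernel 1 + y₁ • powerKernel 2 + volterraConv (powerKernel α) (a * y))
      (Icc 0 T) := by
  intro t ht
  have hconv : volterraConv (powerKernel α) (a * y) t
      = (1 / Real.Gamma α) * ∫ s in (0 : ℝ)..t, (t - s) ^ (α - 1) * (a s * y s) := by
    rw [← intervalIntegral.integral_const_mul]
    refine intervalIntegral.integral_congr fun s hs => ?_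
    rw [uIcc_of_le ht.1] at hs
    simp only [powerKernel_of_nonneg (sub_nonneg.2 hs.2), Pi.mul_apply]
    ring
  simp [hconv, powerKernel_one, powerKernel_two ht.1, hy t ht]

lemma eqOn_add_smul_volterraConv (hα : 1 ≤ α) (ha : Continuous a) (hyc : Continuous y)
    (hy : IsLinearCaputoSolution α T a y₀ y₁ y) (c : ℝ) :
    EqOn y (y₀ • powerKernel 1 + y₁ • powerKernel 2
      + volterraConv (powerKernel α) (fun s => (a s - c) * y s)
      + c • volterraConv (powerKernel α) y) (Icc 0 T) := by
  have hay : a * y = (fun s => (a s - c) * y s) + c • y := by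
    ext s
    simp only [Pi.mul_apply, Pi.add_apply, Pi.smul_apply, smul_eq_mul]
    ring
  have h := hy.eqOn_volterraConv
  rwa [hay, volterraConv_add_right (continuous_powerKernel hα) (by fun_prop)
    (hyc.const_smul c), volterraConv_smul_right, ← add_assoc] at h

lemma eq_mlE_add (hα : 1 ≤ α) (ha : Continuous a) (hyc : Continuous y)
    (hy : IsLinearCaputoSolution α T a y₀ y₁ y) (c : ℝ) (ht : t ∈ Icc 0 T) :
    y t = y₀ * mlE α 1 (c * t ^ α) + y₁ * (t * mlE α 2 (c * t ^ α))
      + ∫ s in (0 : ℝ)..t, mlKernel α α c (t - s) * ((a s - c) * y s) := by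
  let g : ℝ → ℝ := fun s => (a s - c) * y s
  let F := y₀ • powerKernel 1 + y₁ • powerKernel 2 + volterraConv (powerKernel α) g
  have hg : Continuous g := by fun_prop
  have hk := continuous_powerKernel hα
  have hk₁ := continuous_powerKernel le_rfl
  have hk₂ := continuous_powerKernel one_le_two
  have hr := continuous_mlKernel hα hα c
  have hkg := continuous_volterraConv hk hg
  have hF : Continuous F := by fun_prop
  have hres := isVolterraResolvent_mlKernel hα c T
  have h₁ := mlKernel_eq_powerKernel_add hα le_rfl c T ht
  have h₂ := mlKernel_eq_powerKernel_add hα one_le_two c T ht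
  have hg' := hres.volterraConv_eqOn hk hr hg ht
  simp only [Pi.add_apply, Pi.smul_apply, smul_eq_mul] at h₁ h₂ hg'
  have hrF : volterraConv (mlKernel α α c) F t
      = y₀ * volterraConv (mlKernel α α c) (powerKernel 1) t
        + y₁ * volterraConv (mlKernel α α c) (powerKernel 2) t
        + volterraConv (mlKernel α α c) (volterraConv (powerKernel α) g) t := by
    rw [volterraConv_add_right hr (by fun_prop) hkg, volterraConv_add_right hr (by fun_prop)
      (by fun_prop), volterraConv_smul_right, volterraConv_smul_right]
    rfl
  calc y t = F t + c * volterraConv (mlKernel α α c) F t :=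
        hres.solution_eqOn hk hr hF hyc (hy.eqOn_add_smul_volterraConv hα ha hyc c) ht
    _ = y₀ * mlKernel α 1 c t + y₁ * mlKernel α 2 c t + volterraConv (mlKernel α α c) g t := by
        rw [h₁, h₂, hg', hrF]
        simp only [F, Pi.add_apply, Pi.smul_apply, smul_eq_mul]
        ring
    _ = _ := by rw [mlKernel_one ht.1, mlKernel_two ht.1]; rfl

lemma nonneg (hα : 1 ≤ α) (ha : Continuous a) (hyc : Continuous y)
    (hy : IsLinearCaputoSolution α T a y₀ y₁ y) (hm : ∀ s ∈ Icc 0 T, m ≤ a s)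
    (hker : ∀ t ∈ Icc 0 T, 0 ≤ mlE α α (m * t ^ α))
    (hlow : ∀ t ∈ Icc 0 T,
      0 ≤ y₀ * mlE α 1 (m * t ^ α) + y₁ * (t * mlE α 2 (m * t ^ α))) :
    ∀ t ∈ Icc 0 T, 0 ≤ y t := by
  have hr := continuous_mlKernel hα hα m
  refine nonneg_of_integral_mul_le (K := fun t s => mlKernel α α m (t - s) * (a s - m))
    (by fun_prop) hyc (fun t ht s hs => ?_) fun t ht => ?_
  · exact mul_nonneg (mlKernel_nonneg hker ⟨sub_nonneg.2 hs.2, by linarith [hs.1, ht.2]⟩)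
      (sub_nonneg.2 (hm s ⟨hs.1, hs.2.trans ht.2⟩))
  · simp only [mul_assoc]
    linarith [hy.eq_mlE_add hα ha hyc m ht, hlow t ht]

lemma le_of_nonneg (hα : 1 ≤ α) (ha : Continuous a) (hyc : Continuous y)
    (hy : IsLinearCaputoSolution α T a y₀ y₁ y) (ht : t ∈ Icc 0 T)
    (hy0 : ∀ s ∈ Icc 0 t, 0 ≤ y s) (hM : ∀ s ∈ Icc 0 t, a s ≤ M)
    (hker : ∀ s ∈ Icc 0 t, 0 ≤ mlE α α (M * s ^ α)) :
    y t ≤ y₀ * mlE α 1 (M * t ^ α) + y₁ * (t * mlE α 2 (M * t ^ α)) := by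
  rw [hy.eq_mlE_add hα ha hyc M ht, add_le_iff_nonpos_right, ← neg_nonneg,
    ← intervalIntegral.integral_neg]
  refine intervalIntegral.integral_nonneg ht.1 fun s hs => ?_
  have hker' := mlKernel_nonneg hker (t := t - s) ⟨sub_nonneg.2 hs.2, sub_le_self t hs.1⟩
  nlinarith [mul_nonneg hker' (mul_nonneg (sub_nonneg.2 (hM s hs)) (hy0 s hs))]

end IsLinearCaputoSolution

lemma exists_continuous_eqOn_Icc {f : ℝ → ℝ} {u v : ℝ} (hf : ContinuousOn f (Icc u v)) :
    ∃ g : ℝ → ℝ, Continuous g ∧ EqOn g f (Icc u v) := by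
  obtain ⟨g, hg⟩ := ContinuousMap.exists_restrict_eq (isClosed_Icc (a := u) (b := v))
    ⟨_, hf.domRestrict⟩
  exact ⟨g, g.continuous, fun x hx => DFunLike.congr_fun hg ⟨x, hx⟩⟩

theorem linear_separation_upper_bound_general {α T m M t y₁₀ y₁₁ y₂₀ y₂₁ : ℝ} {a y₁ y₂ : ℝ → ℝ}
    (hα : 1 ≤ α) (ha : ContinuousOn a (Icc 0 T))
    (hy₁c : ContinuousOn y₁ (Icc 0 T)) (hy₂c : ContinuousOn y₂ (Icc 0 T))
    (hy₁ : IsLinearCaputoSolution α T a y₁₀ y₁₁ y₁)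
    (hy₂ : IsLinearCaputoSolution α T a y₂₀ y₂₁ y₂)
    (hm : ∀ s ∈ Icc 0 T, m ≤ a s) (hker : ∀ s ∈ Icc 0 T, 0 ≤ mlE α α (m * s ^ α))
    (hlow : ∀ s ∈ Icc 0 T, 0 ≤ (y₂₀ - y₁₀) * mlE α 1 (m * s ^ α)
      + (y₂₁ - y₁₁) * (s * mlE α 2 (m * s ^ α)))
    (ht : t ∈ Icc 0 T) (hM : ∀ s ∈ Icc 0 t, a s ≤ M) :
    |y₂ t - y₁ t| ≤ (y₂₀ - y₁₀) * mlE α 1 (M * t ^ α)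
      + (y₂₁ - y₁₁) * (t * mlE α 2 (M * t ^ α)) := by
  have hα0 : 0 < α := zero_lt_one.trans_le hα
  have hsub : Icc 0 t ⊆ Icc 0 T := Icc_subset_Icc_right ht.2
  obtain ⟨b, hb, hba⟩ := exists_continuous_eqOn_Icc ha
  obtain ⟨z₁, hz₁, hzy₁⟩ := exists_continuous_eqOn_Icc hy₁c
  obtain ⟨z₂, hz₂, hzy₂⟩ := exists_continuous_eqOn_Icc hy₂c
  have hz := (hy₂.congr hba hzy₂).sub hα hb hz₂ hz₁ (hy₁.congr hba hzy₁)
  have hz0 := hz.nonneg hα hb (hz₂.sub hz₁) (fun s hs => hba hs ▸ hm s hs) hker hlow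
  have hmM : m ≤ M := (hm t ht).trans (hM t ⟨ht.1, le_rfl⟩)
  have hle := hz.le_of_nonneg hα hb (hz₂.sub hz₁) ht (fun s hs => hz0 s (hsub hs))
    (fun s hs => hba (hsub hs) ▸ hM s hs)
    fun s hs => mlE_mul_rpow_nonneg_of_le hα0 hα0.le hker hmM s (hsub hs)
  rw [← hzy₁ ht, ← hzy₂ ht, ← Pi.sub_apply, abs_of_nonneg (hz0 t ht)]
  exact hle

/-- Upper separation bound in the linear case `f(t,y) = a(t) y`
(upper estimate of Theorem 2.9 of the paper). -/
theorem linear_separation_upper_bound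
    (α T Tstar L y₁₀ y₁₁ y₂₀ y₂₁ : ℝ) (hα₁ : 1 < α) (hα₂ : α < 2) (hT : 0 < T)
    (a astar : ℝ → ℝ)
    (ha_cont : ContinuousOn a (Set.Icc 0 T))
    (hL : IsGreatest ((fun t => |a t|) '' Set.Icc 0 T) L)
    (hastar : ∀ t ∈ Set.Icc (0 : ℝ) T, IsGreatest (a '' Set.Icc 0 t) (astar t))
    (y₁ y₂ : ℝ → ℝ)
    (hy₁cont : ContinuousOn y₁ (Set.Icc 0 T)) (hy₂cont : ContinuousOn y₂ (Set.Icc 0 T))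
    (hy₁ : ∀ t ∈ Set.Icc (0 : ℝ) T,
      y₁ t = y₁₀ + y₁₁ * t
        + (1 / Real.Gamma α) * ∫ s in (0 : ℝ)..t, (t - s) ^ (α - 1) * (a s * y₁ s))
    (hy₂ : ∀ t ∈ Set.Icc (0 : ℝ) T,
      y₂ t = y₂₀ + y₂₁ * t
        + (1 / Real.Gamma α) * ∫ s in (0 : ℝ)..t, (t - s) ^ (α - 1) * (a s * y₂ s))
    (h0 : y₁₀ ≤ y₂₀) (h1 : y₁₁ ≤ y₂₁)
    (hTstar : 0 < Tstar) (hTstarT : Tstar ≤ T)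
    (hcond : ∀ t ∈ Set.Icc (0 : ℝ) Tstar,
      mlE α α (-(L * t ^ α)) > 0 ∧
        ((y₂₀ - y₁₀) * mlE α 1 (-(L * t ^ α))
            + (y₂₁ - y₁₁) * t * mlE α 2 (-(L * t ^ α)) > 0
          ∨ (y₁₀ = y₂₀ ∧ y₁₁ < y₂₁ ∧ mlE α 2 (-(L * t ^ α)) > 0))) :
    ∀ t ∈ Set.Icc (0 : ℝ) Tstar,
      |y₂ t - y₁ t| ≤ |y₂₀ - y₁₀| * mlE α 1 (astar t * t ^ α)
        + |y₂₁ - y₁₁| * (t * mlE α 2 (astar t * t ^ α)) := by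
  have hsub : Icc 0 Tstar ⊆ Icc 0 T := Icc_subset_Icc_right hTstarT
  intro t ht
  rw [abs_of_nonneg (sub_nonneg.2 h0), abs_of_nonneg (sub_nonneg.2 h1)]
  refine linear_separation_upper_bound_general (m := -L) hα₁.le (ha_cont.mono hsub)
    (hy₁cont.mono hsub) (hy₂cont.mono hsub) (fun s hs => hy₁ s (hsub hs))
    (fun s hs => hy₂ s (hsub hs))
    (fun s hs => neg_le_of_abs_le (hL.2 (mem_image_of_mem _ (hsub hs))))
    (fun s hs => by simpa only [neg_mul] using (hcond s hs).1.le) (fun s hs => ?_) ht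
    fun s hs => (hastar t (hsub ht)).2 (mem_image_of_mem a hs)
  simp only [neg_mul, ← mul_assoc]
  rcases (hcond s hs).2 with hpos | ⟨heq, hlt, hpos⟩
  · exact hpos.le
  · rw [heq, sub_self, zero_mul, zero_add]
    exact mul_nonneg (mul_nonneg (sub_nonneg.2 hlt.le) hs.1) hpos.le
end
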